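/- Let p ≥ 7 be prime, a ∈ [3,p-3] fixed. For all sufficiently large k with k ≢ 1 (mod p), there exists t ∈ Z_p such that the a-subsets A of Z_p minimizing s_k(A) are exactly the sets ξ·{t,t+1,...,t+a-1} for nonzero ξ ∈ Z_p. -/

import Mathlib

/-- `skcount k A`: number of `(k+1)`-tuples of elements of `A` with `x 0 = x 1 + ... + x k`. -/
def skcount {p : ℕ} (k : ℕ) (A : Finset (ZMod p)) : ℕ :=
  ((Fintype.piFinset (fun _ : Fin (k + 1) => A)).filter
    (fun x => x 0 = ∑ i : Fin k, x i.succ)).card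

/-- The interval `{t, t+1, ..., t+a-1}` in `ZMod p`. -/
def interval {p : ℕ} (t : ZMod p) (a : ℕ) : Finset (ZMod p) :=
  (Finset.range a).image (fun j : ℕ => t + (j : ZMod p))

/-!
Expand `p * skcount k A` over the frequencies of `ZMod p` as `∑ γ, Â(γ) ^ k * conj Â(γ)`, where `Â`
is the exponential sum of `A`. The frequency `0` contributes `#A ^ (k + 1)`, and for large `k` the
rest is governed by the frequencies at which `|Â|` attains its maximum `M` over all nonzero
frequencies and all sets of `#A` elements.

A set `A` with `|Â(1)| = M` is an interval: by maximality, exchanging a point of `A` for one outside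
does not increase `|Â(1)|`, so `x ↦ Re (conj Â(1) * e(x / p))` is larger on `A` than off it, and
this function is a cosine. Hence the sets having a frequency `γ ≠ 0` with `|Â(γ)| = M` are the
dilates of intervals, and for an interval the only such frequencies are `1` and `-1`.

For the interval starting at `t` these two contribute `± 2 * M ^ (k + 1) * cos (2 π (k - 1) c / p)`,
where `c = t + (a - 1) / 2` is its centre. As `k ≢ 1`, a suitable `t` minimises this expression,
with a negative minimum, and the only other minimiser is the interval reflected in the origin. After
division by `M ^ (k + 1)` the main term takes finitely many values, independently of `k`, so for
large `k` the gap between them exceeds the error.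
-/

open Finset Filter Topology ComplexConjugate

section Intervals

variable {N : ℕ}

theorem interval_eq_image_add (t : ZMod N) (a : ℕ) :
    interval t a = (interval 0 a).image (t + ·) := by
  simp only [interval, image_image, Function.comp_def, zero_add]

theorem interval_intCast (u : ℤ) (a : ℕ) :
    interval (u : ZMod N) a = (Ico u (u + a)).image (↑) := by
  ext x
  simp only [interval, mem_image, mem_range, mem_Ico]
  constructor
  · rintro ⟨j, hj, rfl⟩
    exact ⟨u + j, by omega, by push_cast; rfl⟩
  · rintro ⟨m, hm, rfl⟩
    refine ⟨(m - u).toNat, by omega, ?_⟩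
    rw [← Int.cast_natCast, Int.toNat_of_nonneg (by omega), ← Int.cast_add, add_sub_cancel]

theorem image_neg_one_mul_interval (t : ZMod N) (a : ℕ) :
    (interval t a).image (-1 * ·) = interval (1 - (a : ZMod N) - t) a := by
  unfold interval
  conv_rhs => rw [← range_image_pred_top_sub]
  rw [image_image, image_image]
  refine image_congr fun j hj => ?_
  have hj : j < a := by simpa using hj
  simp only [Function.comp_apply]
  rw [Nat.sub_sub, Nat.cast_sub (by omega)]
  push_cast
  ring

theorem eq_of_mem_interval_of_add_one_notMem {t x : ZMod N} {a : ℕ}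
    (hx : x ∈ interval t a) (hx' : x + 1 ∉ interval t a) : x = t + (a - 1) := by
  unfold interval at hx hx'
  obtain ⟨j, hj, rfl⟩ := mem_image.mp hx
  have hlast : ¬ j + 1 < a := fun h =>
    hx' (mem_image.mpr ⟨j + 1, mem_range.mpr h, by push_cast; ring⟩)
  obtain rfl : a = j + 1 := by have := mem_range.mp hj; omega
  push_cast
  ring

theorem exists_eq_Ico_of_ordConnected {J : Finset ℤ}
    (hJ : (J : Set ℤ).OrdConnected) : ∃ u : ℤ, J = Ico u (u + #J) := by
  obtain rfl | hne := J.eq_empty_or_nonempty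
  · exact ⟨0, by simp⟩
  have hIcc : J = Icc (J.min' hne) (J.max' hne) :=
    Subset.antisymm (fun m hm => mem_Icc.mpr ⟨J.min'_le m hm, J.le_max' m hm⟩)
      fun m hm => hJ.out (J.min'_mem hne) (J.max'_mem hne) (mem_Icc.mp hm)
  have hcard : (#J : ℤ) = J.max' hne + 1 - J.min' hne := by
    conv_lhs => rw [hIcc]
    have := J.min'_le _ (J.max'_mem hne)
    rw [Int.card_Icc]
    omega
  refine ⟨J.min' hne, ?_⟩
  rw [hcard, add_sub_cancel, Ico_add_one_right_eq_Icc]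
  exact hIcc

theorem ordConnected_of_forall_abs_sub_lt {s w : Set ℤ} (hw : w.OrdConnected) (hsw : s ⊆ w)
    {c : ℝ} (h : ∀ m ∈ s, ∀ n ∈ w \ s, |m - c| < |n - c|) : s.OrdConnected := by
  refine ⟨fun i hi j hj m hm => by_contra fun hms => ?_⟩
  have hmw : m ∈ w \ s := ⟨hw.out (hsw hi) (hsw hj) hm, hms⟩
  have him : (i : ℝ) ≤ m := by exact_mod_cast hm.1
  have hmj : (m : ℝ) ≤ j := by exact_mod_cast hm.2
  exact (abs_le_max_abs_abs (sub_le_sub_right him c) (sub_le_sub_right hmj c)).not_gt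
    (max_lt (h i hi m hmw) (h j hj m hmw))

theorem abs_sub_le_half_of_mem_Ico_ceil {c : ℝ} {m : ℤ}
    (hm : m ∈ Ico ⌈c - N / 2⌉ (⌈c - N / 2⌉ + N)) : |m - c| ≤ N / 2 := by
  obtain ⟨hwm, hmw⟩ := mem_Ico.mp hm
  have hlow : c - N / 2 ≤ m := Int.ceil_le.mp hwm
  have hhigh : (m : ℝ) + 1 ≤ ⌈c - N / 2⌉ + N := by exact_mod_cast hmw
  have hceil : (⌈c - N / 2⌉ : ℝ) < c - N / 2 + 1 := Int.ceil_lt_add_one _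
  exact abs_le.mpr ⟨by linarith, by linarith⟩

theorem card_interval {a : ℕ} (ha : a ≤ N) (t : ZMod N) : #(interval t a) = a := by
  unfold interval
  rw [card_image_of_injOn, card_range]
  intro i hi j hj h
  simp only [coe_range, Set.mem_Iio] at hi hj
  have hval := congrArg ZMod.val (add_left_cancel h)
  rwa [ZMod.val_natCast_of_lt (hi.trans_le ha), ZMod.val_natCast_of_lt (hj.trans_le ha)] at hval

variable [NeZero N]

theorem mem_interval_iff {t x : ZMod N} {a : ℕ} (ha : a ≤ N) :
    x ∈ interval t a ↔ (x - t).val < a := by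
  simp only [interval, mem_image, mem_range]
  constructor
  · rintro ⟨j, hj, rfl⟩
    rwa [add_sub_cancel_left, ZMod.val_natCast_of_lt (hj.trans_le ha)]
  · intro h
    exact ⟨_, h, by rw [ZMod.natCast_zmod_val, add_sub_cancel]⟩

theorem add_natCast_mem_interval_iff {t : ZMod N} {a j : ℕ} (ha : a ≤ N) (hj : j < N) :
    t + j ∈ interval t a ↔ j < a := by
  rw [mem_interval_iff ha, add_sub_cancel_left, ZMod.val_natCast_of_lt hj]

theorem exists_ne_mem_interval_add_notMem {a : ℕ} (ha : 2 ≤ a) (ha' : a + 2 ≤ N) (t : ZMod N)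
    {d : ZMod N} (h0 : d ≠ 0) (h1 : d ≠ 1) (h2 : d ≠ -1) :
    ∃ x ∈ interval t a, ∃ y ∈ interval t a, x ≠ y ∧
      x + d ∉ interval t a ∧ y + d ∉ interval t a := by
  obtain ⟨e, heN, rfl⟩ : ∃ e < N, (e : ZMod N) = d := ⟨d.val, d.val_lt, ZMod.natCast_zmod_val d⟩
  have he0 : e ≠ 0 := by rintro rfl; exact h0 Nat.cast_zero
  have he1 : e ≠ 1 := by rintro rfl; exact h1 Nat.cast_one
  have he2 : e + 1 ≠ N := by
    intro h
    refine h2 (eq_neg_of_add_eq_zero_left ?_)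
    rw [← Nat.cast_add_one, h, ZMod.natCast_self]
  have hmem : ∀ {j : ℕ}, j < N → (t + j ∈ interval t a ↔ j < a) :=
    add_natCast_mem_interval_iff (by omega)
  -- The truncated difference makes this the first index whose shift by `e` is at least `a`.
  set i := a - e
  refine ⟨t + i, (hmem (by omega)).mpr (by omega), t + (i + 1 : ℕ),
    (hmem (by omega)).mpr (by omega), fun h => ?_, ?_, ?_⟩
  · have : Fact (1 < N) := ⟨by omega⟩
    simp at h
  · rw [add_assoc, ← Nat.cast_add, hmem (by omega)]
    omega
  · rw [add_assoc, ← Nat.cast_add, hmem (by omega)]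
    omega

theorem exists_intCast_eq_of_mem_Ico (w : ℤ) (x : ZMod N) :
    ∃ m ∈ Ico w (w + N), (m : ZMod N) = x := by
  have huniv : interval (w : ZMod N) N = univ :=
    eq_univ_of_card _ ((card_interval le_rfl _).trans (ZMod.card N).symm)
  rw [interval_intCast] at huniv
  exact mem_image.mp (huniv ▸ mem_univ x)

theorem exists_eq_interval_of_abs_sub_lt {A : Finset (ZMod N)} {c : ℝ}
    (h : ∀ m n : ℤ, (m : ZMod N) ∈ A → (n : ZMod N) ∉ A → |m - c| ≤ N / 2 → |n - c| ≤ N / 2 →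
      |m - c| < |n - c|) :
    ∃ t, A = interval t #A := by
  set w : ℤ := ⌈c - N / 2⌉
  set J : Finset ℤ := {m ∈ Ico w (w + N) | (m : ZMod N) ∈ A}
  have hJA : J.image (↑) = A := by
    ext x
    simp only [J, mem_image, mem_filter]
    constructor
    · rintro ⟨m, ⟨-, hm⟩, rfl⟩
      exact hm
    · intro hx
      obtain ⟨m, hm, rfl⟩ := exists_intCast_eq_of_mem_Ico w x
      exact ⟨m, ⟨hm, hx⟩, rfl⟩
  have hJ : (J : Set ℤ).OrdConnected := by
    refine ordConnected_of_forall_abs_sub_lt (c := c) (w := Ico w (w + N)) ?_ ?_ ?_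
    · rw [coe_Ico]
      exact Set.ordConnected_Ico
    · exact coe_subset.mpr (filter_subset _ _)
    · rintro m hm n ⟨hnw, hnJ⟩
      obtain ⟨hmw, hmA⟩ := mem_filter.mp hm
      exact h m n hmA (fun hnA => hnJ (mem_filter.mpr ⟨hnw, hnA⟩))
        (abs_sub_le_half_of_mem_Ico_ceil hmw) (abs_sub_le_half_of_mem_Ico_ceil hnw)
  have hJN : #J ≤ N := (card_filter_le _ _).trans (by simp)
  obtain ⟨u, hu⟩ := exists_eq_Ico_of_ordConnected hJ
  have hA : A = interval (u : ZMod N) #J := by rw [interval_intCast, ← hu, hJA]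
  have hcard : #A = #J := by rw [hA, card_interval hJN]
  exact ⟨u, hcard ▸ hA⟩

end Intervals

section ExponentialSums

variable {N : ℕ} [NeZero N]

/-- The exponential sum `∑ x ∈ A, e(γ x / N)` of `A` at the frequency `γ`, that is, the Fourier
transform of the indicator function of `A` at `-γ`. -/
noncomputable def expSum (γ : ZMod N) (A : Finset (ZMod N)) : ℂ :=
  ∑ x ∈ A, ZMod.stdAddChar (γ * x)

theorem conj_expSum (γ : ZMod N) (A : Finset (ZMod N)) :
    conj (expSum γ A) = expSum (-γ) A := by
  simp only [expSum, map_sum, ← AddChar.map_neg_eq_conj, neg_mul]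

theorem expSum_zero (A : Finset (ZMod N)) : expSum 0 A = #A := by
  simp [expSum]

theorem expSum_image_add (γ t : ZMod N) (A : Finset (ZMod N)) :
    expSum γ (A.image (t + ·)) = ZMod.stdAddChar (γ * t) * expSum γ A := by
  unfold expSum
  rw [sum_image fun x _ y _ h => add_left_cancel h, mul_sum]
  simp only [mul_add, AddChar.map_add_eq_mul]

theorem expSum_interval (γ t : ZMod N) (a : ℕ) :
    expSum γ (interval t a) = ZMod.stdAddChar (γ * t) * expSum γ (interval 0 a) := by
  rw [interval_eq_image_add, expSum_image_add]

theorem norm_expSum_interval (γ t : ZMod N) (a : ℕ) :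
    ‖expSum γ (interval t a)‖ = ‖expSum γ (interval 0 a)‖ := by
  rw [expSum_interval, norm_mul, AddChar.norm_apply, one_mul]

theorem addChar_map_sum {ι G M : Type*} [AddCommMonoid G] [CommMonoid M] (ψ : AddChar G M)
    (s : Finset ι) (f : ι → G) : ψ (∑ i ∈ s, f i) = ∏ i ∈ s, ψ (f i) :=
  map_prod ψ.toMonoidHom (fun i => Multiplicative.ofAdd (f i)) s

theorem expSum_pow_mul_conj (k : ℕ) (γ : ZMod N) (A : Finset (ZMod N)) :
    expSum γ A ^ k * conj (expSum γ A) = ∑ x ∈ Fintype.piFinset fun _ : Fin (k + 1) => A,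
      ZMod.stdAddChar (γ * (∑ i : Fin k, x i.succ - x 0)) := by
  have hexpand := prod_univ_sum (fun _ : Fin (k + 1) => A)
    fun i x => (ZMod.stdAddChar ((if i = 0 then -γ else γ) * x) : ℂ)
  simp only [Fin.prod_univ_succ, if_true, Fin.succ_ne_zero, if_false, prod_const, card_univ,
    Fintype.card_fin] at hexpand
  rw [conj_expSum, mul_comm]
  refine hexpand.trans (sum_congr rfl fun x _ => ?_)
  rw [mul_sub, sub_eq_neg_add, AddChar.map_add_eq_mul, mul_sum, addChar_map_sum, neg_mul]

theorem natCast_mul_skcount (k : ℕ) (A : Finset (ZMod N)) :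
    (N : ℂ) * skcount k A = ∑ γ : ZMod N, expSum γ A ^ k * conj (expSum γ A) := by
  have horth (x : Fin (k + 1) → ZMod N) :
      ∑ γ : ZMod N, (ZMod.stdAddChar (γ * (∑ i : Fin k, x i.succ - x 0)) : ℂ) =
        if x 0 = ∑ i : Fin k, x i.succ then (N : ℂ) else 0 := by
    rw [AddChar.sum_mulShift _ (ZMod.isPrimitive_stdAddChar N), ZMod.card]
    simp only [sub_eq_zero, eq_comm (a := x 0), Nat.cast_ite, Nat.cast_zero]
  simp only [expSum_pow_mul_conj]
  rw [sum_comm]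
  simp only [horth]
  rw [← sum_filter, sum_const, nsmul_eq_mul, mul_comm]
  rfl

theorem natCast_mul_skcount_eq_card_pow_add (k : ℕ) (A : Finset (ZMod N)) :
    (N : ℝ) * skcount k A = (#A : ℝ) ^ (k + 1) +
      ∑ γ : ZMod N with γ ≠ 0, (expSum γ A ^ k * conj (expSum γ A)).re := by
  have hre := congrArg Complex.re (natCast_mul_skcount k A)
  have hzero : expSum 0 A ^ k * conj (expSum 0 A) = (((#A : ℝ) ^ (k + 1) : ℝ) : ℂ) := by
    rw [expSum_zero, Complex.conj_natCast, ← pow_succ]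
    push_cast
    rfl
  rw [← add_sum_erase _ _ (mem_univ (0 : ZMod N)), hzero, Complex.add_re, Complex.ofReal_re,
    Complex.re_sum, ← filter_ne'] at hre
  rw [← hre]
  norm_cast

theorem eq_or_eq_neg_of_re_stdAddChar_eq {z w : ZMod N}
    (h : (ZMod.stdAddChar z : ℂ).re = (ZMod.stdAddChar w : ℂ).re) : z = w ∨ z = -w := by
  have hnorm : ‖(ZMod.stdAddChar z : ℂ)‖ = ‖(ZMod.stdAddChar w : ℂ)‖ := by
    simp only [AddChar.norm_apply]
  have him : (ZMod.stdAddChar z : ℂ).im ^ 2 = (ZMod.stdAddChar w : ℂ).im ^ 2 := by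
    rw [Complex.norm_eq_sqrt_sq_add_sq, Complex.norm_eq_sqrt_sq_add_sq, h] at hnorm
    rw [Real.sqrt_inj (by positivity) (by positivity)] at hnorm
    exact add_left_cancel hnorm
  rcases sq_eq_sq_iff_eq_or_eq_neg.mp him with him | him
  · exact .inl (ZMod.injective_stdAddChar (Complex.ext h him))
  · refine .inr (ZMod.injective_stdAddChar ?_)
    rw [AddChar.map_neg_eq_conj]
    exact Complex.ext h him

theorem exists_mul_re_stdAddChar_neg (hN : 1 < N) {r : ℝ} (hr : r ≠ 0) :
    ∃ z : ZMod N, r * (ZMod.stdAddChar z : ℂ).re < 0 := by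
  have hsum : ∑ z : ZMod N, (ZMod.stdAddChar z : ℂ) = 0 := by
    have : Fact (1 < N) := ⟨hN⟩
    simpa using AddChar.sum_mulShift (1 : ZMod N) (ZMod.isPrimitive_stdAddChar N)
  have hneg : ∑ z : ZMod N, -(r * (ZMod.stdAddChar z : ℂ).re) = 0 := by
    rw [sum_neg_distrib, ← mul_sum, ← Complex.re_sum, hsum, Complex.zero_re, mul_zero, neg_zero]
  obtain ⟨z, -, hz⟩ := exists_pos_of_sum_zero_of_exists_nonzero _ hneg
    ⟨0, mem_univ 0, by simpa using hr⟩
  exact ⟨z, neg_pos.mp hz⟩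

end ExponentialSums

section Peaks

variable {N : ℕ} [NeZero N] {A : Finset (ZMod N)}

/-- `A` maximises the modulus of the exponential sum at frequency one among the sets of its
size. -/
def IsPeak (A : Finset (ZMod N)) : Prop :=
  ∀ B : Finset (ZMod N), #B = #A → ‖expSum 1 B‖ ≤ ‖expSum 1 A‖

theorem exists_isPeak {a : ℕ} (ha : a ≤ N) : ∃ A : Finset (ZMod N), #A = a ∧ IsPeak A := by
  obtain ⟨A, hA, hmax⟩ := exists_max_image (powersetCard a (univ : Finset (ZMod N)))
    (‖expSum 1 ·‖) (powersetCard_nonempty.mpr (by rwa [card_univ, ZMod.card]))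
  rw [mem_powersetCard_univ] at hA
  exact ⟨A, hA, fun B hB => hmax B (mem_powersetCard_univ.mpr (hB.trans hA))⟩

theorem re_conj_mul_lt_of_norm_add_sub_le {S u v : ℂ} (huv : u ≠ v) (h : ‖S + (u - v)‖ ≤ ‖S‖) :
    (conj S * u).re < (conj S * v).re := by
  have hsq : Complex.normSq (S + (u - v)) ≤ Complex.normSq S := by
    simpa only [Complex.normSq_eq_norm_sq] using pow_le_pow_left₀ (norm_nonneg _) h 2
  have hpos : 0 < Complex.normSq (u - v) := Complex.normSq_pos.mpr (sub_ne_zero.mpr huv)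
  simp only [Complex.normSq_apply, Complex.add_re, Complex.add_im, Complex.sub_re,
    Complex.sub_im, Complex.mul_re, Complex.conj_re, Complex.conj_im] at *
  linarith

-- Otherwise replacing `x` by `y` in `A` would not decrease `‖expSum 1 A‖`.
theorem IsPeak.re_conj_mul_stdAddChar_lt (hA : IsPeak A) {x y : ZMod N} (hx : x ∈ A)
    (hy : y ∉ A) :
    (conj (expSum 1 A) * ZMod.stdAddChar y).re < (conj (expSum 1 A) * ZMod.stdAddChar x).re := by
  have hyx : y ∉ A.erase x := fun h => hy (mem_of_mem_erase h)
  have hswap : expSum 1 (insert y (A.erase x)) =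
      expSum 1 A + (ZMod.stdAddChar y - ZMod.stdAddChar x) := by
    unfold expSum
    rw [sum_insert hyx, ← add_sum_erase A _ hx]
    simp only [one_mul]
    ring
  refine re_conj_mul_lt_of_norm_add_sub_le (fun h => hy (ZMod.injective_stdAddChar h ▸ hx)) ?_
  rw [← hswap]
  exact hA _ (by rw [card_insert_of_notMem hyx, card_erase_add_one hx])

theorem IsPeak.expSum_ne_zero (hA : IsPeak A) (hne : A.Nonempty) (huniv : A ≠ univ) :
    expSum 1 A ≠ 0 := by
  obtain ⟨x, hx⟩ := hne
  obtain ⟨y, hy⟩ : ∃ y, y ∉ A := by simpa [eq_univ_iff_forall] using huniv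
  intro h
  simpa [h] using hA.re_conj_mul_stdAddChar_lt hx hy

theorem re_conj_mul_stdAddChar_intCast (z : ℂ) (m : ℤ) :
    (conj z * ZMod.stdAddChar (m : ZMod N)).re =
      ‖z‖ * Real.cos |2 * Real.pi / N * (m - z.arg * N / (2 * Real.pi))| := by
  have hN : (N : ℂ) ≠ 0 := NeZero.ne _
  have hpi : (Real.pi : ℂ) ≠ 0 := by exact_mod_cast Real.pi_ne_zero
  conv_lhs => rw [ZMod.stdAddChar_coe, ← Complex.norm_mul_exp_arg_mul_I z]
  rw [map_mul, Complex.conj_ofReal, mul_assoc, Complex.re_ofReal_mul, ← Complex.exp_conj,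
    ← Complex.exp_add, map_mul, Complex.conj_ofReal, Complex.conj_I, Real.cos_abs,
    ← Complex.exp_ofReal_mul_I_re]
  congr 3
  push_cast
  field_simp
  ring

theorem IsPeak.exists_eq_interval (hA : IsPeak A) : ∃ t, A = interval t #A := by
  have hN : (0 : ℝ) < N := Nat.cast_pos.mpr (NeZero.pos N)
  have hscale : 0 < 2 * Real.pi / N := div_pos Real.two_pi_pos hN
  have hmem {x : ℝ} (hx : |x| ≤ N / 2) : |2 * Real.pi / N * x| ∈ Set.Icc 0 Real.pi := by
    refine ⟨abs_nonneg _, ?_⟩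
    calc |2 * Real.pi / N * x| = 2 * Real.pi / N * |x| := by rw [abs_mul, abs_of_pos hscale]
      _ ≤ 2 * Real.pi / N * (N / 2) := by gcongr
      _ = Real.pi := by field_simp
  refine exists_eq_interval_of_abs_sub_lt (c := (expSum 1 A).arg * N / (2 * Real.pi))
    fun m n hm hn hmN hnN => ?_
  have hre := hA.re_conj_mul_stdAddChar_lt hm hn
  rw [re_conj_mul_stdAddChar_intCast, re_conj_mul_stdAddChar_intCast] at hre
  have hcos := lt_of_mul_lt_mul_left hre (norm_nonneg _)
  rw [Real.strictAntiOn_cos.lt_iff_gt (hmem hnN) (hmem hmN), abs_mul, abs_mul] at hcos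
  exact lt_of_mul_lt_mul_left hcos (abs_nonneg _)

theorem isPeak_interval {a : ℕ} (ha : a ≤ N) (t : ZMod N) : IsPeak (interval t a) := by
  obtain ⟨P, rfl, hP⟩ := exists_isPeak ha
  obtain ⟨u, hu⟩ := hP.exists_eq_interval
  intro B hB
  rw [card_interval ha] at hB
  rw [norm_expSum_interval, ← norm_expSum_interval 1 u, ← hu]
  exact hP B hB

end Peaks

section Dilates

theorem image_mul_image_mul {M : Type*} [Semigroup M] [DecidableEq M] (x y : M) (A : Finset M) :
    (A.image (y * ·)).image (x * ·) = A.image (x * y * ·) := by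
  simp only [image_image, Function.comp_def, mul_assoc]

variable {p : ℕ} [Fact p.Prime]

theorem card_image_mul {ξ : ZMod p} (hξ : ξ ≠ 0) (A : Finset (ZMod p)) :
    #(A.image (ξ * ·)) = #A :=
  card_image_of_injective _ (mul_right_injective₀ hξ)

theorem expSum_image_mul {ξ : ZMod p} (hξ : ξ ≠ 0) (γ : ZMod p) (A : Finset (ZMod p)) :
    expSum γ (A.image (ξ * ·)) = expSum (γ * ξ) A := by
  unfold expSum
  rw [sum_image fun x _ y _ h => mul_left_cancel₀ hξ h]
  simp only [mul_assoc]

theorem skcount_image_mul {ξ : ZMod p} (hξ : ξ ≠ 0) (k : ℕ) (A : Finset (ZMod p)) :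
    skcount k (A.image (ξ * ·)) = skcount k A := by
  have h : (p : ℂ) * skcount k (A.image (ξ * ·)) = p * skcount k A := by
    simp only [natCast_mul_skcount, expSum_image_mul hξ]
    exact Fintype.sum_equiv (Equiv.mulRight₀ ξ hξ) _ _ fun γ => rfl
  exact_mod_cast mul_left_cancel₀ (NeZero.ne (p : ℂ)) h

-- For `d = γ⁻¹`, the points of `interval t a` leaving it under `x ↦ x + d` correspond to those of
-- `interval u a` leaving it under `x ↦ x + 1`, and there is only one of the latter.
theorem eq_one_or_eq_neg_one_of_image_mul_interval {a : ℕ} (ha : 2 ≤ a) (ha' : a + 2 ≤ p)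
    {γ t u : ZMod p} (hγ : γ ≠ 0) (h : (interval t a).image (γ * ·) = interval u a) :
    γ = 1 ∨ γ = -1 := by
  by_contra! hne
  have hmem (x : ZMod p) : γ * x ∈ interval u a ↔ x ∈ interval t a := by
    rw [← h, (mul_right_injective₀ hγ).mem_finset_image]
  have hexit {x : ZMod p} (hx : x ∈ interval t a) (hx' : x + γ⁻¹ ∉ interval t a) :
      γ * x = u + (a - 1) := by
    refine eq_of_mem_interval_of_add_one_notMem ((hmem x).mpr hx) ?_
    rwa [← hmem, mul_add, mul_inv_cancel₀ hγ] at hx'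
  obtain ⟨x, hx, y, hy, hxy, hx', hy'⟩ := exists_ne_mem_interval_add_notMem ha ha' t
    (inv_ne_zero hγ) (inv_ne_one.mpr hne.1) fun h => hne.2 (by rw [← inv_inv γ, h]; simp)
  exact hxy (mul_left_cancel₀ hγ ((hexit hx hx').trans (hexit hy hy').symm))

end Dilates

section PeakNorm

/-- The largest modulus of an exponential sum at frequency one among the sets of `a` residues
modulo `N`, for `a ≤ N`; by `isPeak_interval` it is attained by the intervals. -/
noncomputable def peakNorm (N : ℕ) [NeZero N] (a : ℕ) : ℝ :=
  ‖expSum 1 (interval (0 : ZMod N) a)‖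

theorem norm_expSum_one_interval {N : ℕ} [NeZero N] (t : ZMod N) (a : ℕ) :
    ‖expSum 1 (interval t a)‖ = peakNorm N a :=
  norm_expSum_interval 1 t a

theorem peakNorm_pos {N : ℕ} [NeZero N] {a : ℕ} (ha : 0 < a) (haN : a < N) :
    0 < peakNorm N a := by
  have hcard := card_interval haN.le (0 : ZMod N)
  refine norm_pos_iff.mpr ((isPeak_interval haN.le 0).expSum_ne_zero ?_ fun huniv => ?_)
  · rwa [← card_pos, hcard]
  · rw [huniv, card_univ, ZMod.card] at hcard
    exact haN.ne' hcard

variable {p : ℕ} [Fact p.Prime]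

theorem norm_expSum_le_peakNorm {γ : ZMod p} (hγ : γ ≠ 0) (A : Finset (ZMod p)) :
    ‖expSum γ A‖ ≤ peakNorm p #A := by
  have hA : #A ≤ p := by simpa using card_le_univ A
  have h := isPeak_interval hA 0 (A.image (γ * ·))
    (by rw [card_image_mul hγ, card_interval hA])
  rwa [expSum_image_mul hγ, one_mul] at h

theorem exists_image_mul_eq_interval {γ : ZMod p} (hγ : γ ≠ 0) {A : Finset (ZMod p)}
    (h : ‖expSum γ A‖ = peakNorm p #A) : ∃ u, A.image (γ * ·) = interval u #A := by
  have hpeak : IsPeak (A.image (γ * ·)) := by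
    intro B hB
    rw [card_image_mul hγ] at hB
    rw [expSum_image_mul hγ, one_mul, h, ← hB]
    exact norm_expSum_le_peakNorm one_ne_zero B
  simpa only [card_image_mul hγ] using hpeak.exists_eq_interval

theorem exists_eq_image_mul_interval {γ : ZMod p} (hγ : γ ≠ 0) {A : Finset (ZMod p)}
    (h : ‖expSum γ A‖ = peakNorm p #A) :
    ∃ ξ : ZMod p, ξ ≠ 0 ∧ ∃ u, A = (interval u #A).image (ξ * ·) := by
  obtain ⟨u, hu⟩ := exists_image_mul_eq_interval hγ h
  refine ⟨γ⁻¹, inv_ne_zero hγ, u, ?_⟩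
  simp only [← hu, image_mul_image_mul, inv_mul_cancel₀ hγ, one_mul, image_id']

theorem norm_expSum_interval_eq_peakNorm_iff {a : ℕ} (ha : 2 ≤ a) (ha' : a + 2 ≤ p)
    {γ : ZMod p} (hγ : γ ≠ 0) (t : ZMod p) :
    ‖expSum γ (interval t a)‖ = peakNorm p a ↔ γ = 1 ∨ γ = -1 := by
  have hcard := card_interval (show a ≤ p by omega) t
  constructor
  · intro h
    obtain ⟨u, hu⟩ := exists_image_mul_eq_interval hγ (h.trans (by rw [hcard]))
    rw [hcard] at hu
    exact eq_one_or_eq_neg_one_of_image_mul_interval ha ha' hγ hu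
  · rintro (rfl | rfl)
    · exact norm_expSum_one_interval t a
    · rw [← conj_expSum, RCLike.norm_conj, norm_expSum_one_interval]

theorem two_ne_zero_of_ne_two (hp2 : p ≠ 2) : (2 : ZMod p) ≠ 0 :=
  Ring.two_ne_zero (by rwa [ZMod.ringChar_zmod_n])

-- The interval centred at the origin is symmetric, so its exponential sum is real.
theorem exists_expSum_one_interval_eq (hp2 : p ≠ 2) (a : ℕ) :
    ∃ ε : ℤˣ, ∀ t : ZMod p, expSum 1 (interval t a) =
      ((ε * peakNorm p a : ℝ) : ℂ) * ZMod.stdAddChar (t + ((a : ZMod p) - 1) / 2) := by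
  have h2 := two_ne_zero_of_ne_two hp2
  set h : ZMod p := ((a : ZMod p) - 1) / 2
  have hreal : conj (expSum 1 (interval (-h) a)) = expSum 1 (interval (-h) a) := by
    rw [conj_expSum, ← one_mul (-1 : ZMod p), ← expSum_image_mul (neg_ne_zero.mpr one_ne_zero),
      image_neg_one_mul_interval]
    congr 2
    simp only [h]
    field_simp
    ring
  obtain ⟨T, hT⟩ := Complex.conj_eq_iff_real.mp hreal
  obtain ⟨ε, hε⟩ : ∃ ε : ℤˣ, T = ε * peakNorm p a := by
    have habs : |T| = peakNorm p a := by
      rw [← norm_expSum_one_interval (-h), hT, Complex.norm_real, Real.norm_eq_abs]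
    rcases abs_choice T with hsign | hsign <;> rw [← habs, hsign]
    · exact ⟨1, by simp⟩
    · exact ⟨-1, by simp⟩
  refine ⟨ε, fun t => ?_⟩
  rw [← hε, ← hT, expSum_interval 1 t, expSum_interval 1 (-h), mul_right_comm,
    ← AddChar.map_add_eq_mul]
  congr 2
  ring

end PeakNorm

section LeadingTerm

variable {p : ℕ} [Fact p.Prime]

/-- The nonzero frequencies at which the exponential sum of `A` has the largest modulus possible
for a set of its size. -/
noncomputable def peakFreqs (A : Finset (ZMod p)) : Finset (ZMod p) :=
  {γ | γ ≠ 0 ∧ ‖expSum γ A‖ = peakNorm p #A}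

/-- The contribution of the peak frequencies to `p * skcount k A - #A ^ (k + 1)`, normalised by
`peakNorm p #A ^ (k + 1)`. -/
noncomputable def leadingTerm (k : ℕ) (A : Finset (ZMod p)) : ℝ :=
  (∑ γ ∈ peakFreqs A, (expSum γ A ^ k * conj (expSum γ A)).re) / peakNorm p #A ^ (k + 1)

theorem tendsto_re_pow_mul_conj_div {z : ℂ} {M : ℝ} (h : ‖z‖ < M) :
    Tendsto (fun k : ℕ => (z ^ k * conj z).re / M ^ (k + 1)) atTop (𝓝 0) := by
  have hM : 0 < M := (norm_nonneg z).trans_lt h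
  refine squeeze_zero_norm (fun k => ?_) <| (tendsto_add_atTop_iff_nat 1).mpr
    (tendsto_pow_atTop_nhds_zero_of_lt_one (by positivity) ((div_lt_one hM).mpr h))
  rw [norm_div, norm_pow, Real.norm_of_nonneg hM.le, div_pow]
  gcongr
  calc ‖(z ^ k * conj z).re‖ ≤ ‖z ^ k * conj z‖ := Complex.abs_re_le_norm _
    _ = ‖z‖ ^ (k + 1) := by rw [norm_mul, norm_pow, RCLike.norm_conj, pow_succ]

theorem tendsto_skcount_sub_leadingTerm (A : Finset (ZMod p)) :
    Tendsto (fun k => (p * skcount k A - #A ^ (k + 1)) / peakNorm p #A ^ (k + 1) - leadingTerm k A)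
      atTop (𝓝 0) := by
  have herror (k : ℕ) :
      ((p : ℝ) * skcount k A - #A ^ (k + 1)) / peakNorm p #A ^ (k + 1) - leadingTerm k A =
        ∑ γ : ZMod p with γ ≠ 0 ∧ ‖expSum γ A‖ ≠ peakNorm p #A,
          (expSum γ A ^ k * conj (expSum γ A)).re / peakNorm p #A ^ (k + 1) := by
    rw [natCast_mul_skcount_eq_card_pow_add, add_sub_cancel_left, leadingTerm, peakFreqs,
      ← sum_filter_add_sum_filter_not _ fun γ => ‖expSum γ A‖ = peakNorm p #A,
      filter_filter, filter_filter, add_div, add_sub_cancel_left, sum_div]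
  have hterm (γ : ZMod p) (hγ : γ ∈ ({γ | γ ≠ 0 ∧ ‖expSum γ A‖ ≠ peakNorm p #A} : Finset _)) :=
    have ⟨hγ0, hγM⟩ := (mem_filter.mp hγ).2
    tendsto_re_pow_mul_conj_div (lt_of_le_of_ne (norm_expSum_le_peakNorm hγ0 A) hγM)
  simpa only [herror, sum_const_zero] using tendsto_finsetSum _ hterm

theorem leadingTerm_image_mul {ξ : ZMod p} (hξ : ξ ≠ 0) (k : ℕ) (A : Finset (ZMod p)) :
    leadingTerm k (A.image (ξ * ·)) = leadingTerm k A := by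
  unfold leadingTerm
  rw [card_image_mul hξ]
  congr 1
  refine sum_equiv (Equiv.mulRight₀ ξ hξ) (fun γ => ?_) fun γ _ => ?_
  · simp [peakFreqs, card_image_mul hξ, expSum_image_mul hξ, hξ]
  · simp [expSum_image_mul hξ]

theorem peakFreqs_interval {a : ℕ} (ha : 2 ≤ a) (ha' : a + 2 ≤ p) (t : ZMod p) :
    peakFreqs (interval t a) = {1, -1} := by
  ext γ
  rw [peakFreqs, mem_filter_univ, card_interval (by omega), mem_insert, mem_singleton]
  constructor
  · rintro ⟨hγ, h⟩
    exact (norm_expSum_interval_eq_peakNorm_iff ha ha' hγ t).mp h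
  · intro h
    have hγ : γ ≠ 0 := by rcases h with rfl | rfl <;> simp
    exact ⟨hγ, (norm_expSum_interval_eq_peakNorm_iff ha ha' hγ t).mpr h⟩

theorem re_expSum_neg_pow_mul_conj (k : ℕ) (γ : ZMod p) (A : Finset (ZMod p)) :
    (expSum (-γ) A ^ k * conj (expSum (-γ) A)).re = (expSum γ A ^ k * conj (expSum γ A)).re := by
  rw [← conj_expSum, ← map_pow, ← map_mul, Complex.conj_re]

theorem re_ofReal_mul_stdAddChar_pow_mul_conj (k : ℕ) (r : ℝ) (c : ZMod p) :
    ((r * ZMod.stdAddChar c : ℂ) ^ k * conj (r * ZMod.stdAddChar c : ℂ)).re =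
      r ^ (k + 1) * (ZMod.stdAddChar ((k - 1 : ZMod p) * c) : ℂ).re := by
  have hchar : (ZMod.stdAddChar ((k - 1 : ZMod p) * c) : ℂ) =
      ZMod.stdAddChar c ^ k * conj (ZMod.stdAddChar c) := by
    rw [← AddChar.map_nsmul_eq_pow, ← AddChar.map_neg_eq_conj, ← AddChar.map_add_eq_mul,
      nsmul_eq_mul, sub_one_mul, sub_eq_add_neg]
  rw [hchar, ← Complex.re_ofReal_mul, map_mul, Complex.conj_ofReal]
  push_cast
  ring_nf

theorem exists_leadingTerm_interval_eq {a : ℕ} (ha : 2 ≤ a) (ha' : a + 2 ≤ p) (k : ℕ) :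
    ∃ ε : ℤˣ, ∀ t : ZMod p, leadingTerm k (interval t a) =
      2 * (ε * (ZMod.stdAddChar ((k - 1 : ZMod p) * (t + ((a : ZMod p) - 1) / 2)) : ℂ).re) := by
  have hp2 : p ≠ 2 := by omega
  have hM := peakNorm_pos (N := p) (a := a) (by omega) (by omega)
  have hone : (1 : ZMod p) ≠ -1 := by
    have : Fact (2 < p) := ⟨by omega⟩
    exact ZMod.neg_one_ne_one.symm
  obtain ⟨ε, hε⟩ := exists_expSum_one_interval_eq hp2 a
  refine ⟨ε ^ (k + 1), fun t => ?_⟩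
  rw [leadingTerm, peakFreqs_interval ha ha', sum_pair hone, re_expSum_neg_pow_mul_conj, hε,
    re_ofReal_mul_stdAddChar_pow_mul_conj, card_interval (by omega)]
  push_cast
  field_simp
  ring

theorem leadingTerm_eq_zero_or_exists_eq_image_mul_interval (k : ℕ) (A : Finset (ZMod p)) :
    leadingTerm k A = 0 ∨ ∃ ξ : ZMod p, ξ ≠ 0 ∧ ∃ u, A = (interval u #A).image (ξ * ·) := by
  rcases (peakFreqs A).eq_empty_or_nonempty with hempty | ⟨γ, hγ⟩
  · exact .inl (by simp [leadingTerm, hempty])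
  · obtain ⟨hγ0, hγM⟩ := (mem_filter.mp hγ).2
    exact .inr (exists_eq_image_mul_interval hγ0 hγM)

/-- A finite set, independent of `k`, containing the leading terms of all `A` with
`2 ≤ #A ≤ p - 2`. -/
def leadingTermValues (p : ℕ) [NeZero p] : Set ℝ :=
  insert 0 (Set.range fun x : ℤˣ × ZMod p => 2 * (x.1 * (ZMod.stdAddChar x.2 : ℂ).re))

theorem leadingTerm_mem_leadingTermValues {A : Finset (ZMod p)} (hA : 2 ≤ #A) (hA' : #A + 2 ≤ p)
    (k : ℕ) : leadingTerm k A ∈ leadingTermValues p := by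
  rcases leadingTerm_eq_zero_or_exists_eq_image_mul_interval k A with hzero | ⟨ξ, hξ, u, hAu⟩
  · exact .inl hzero
  · obtain ⟨ε, hε⟩ := exists_leadingTerm_interval_eq hA hA' k
    refine .inr ⟨(ε, (k - 1 : ZMod p) * (u + ((#A : ZMod p) - 1) / 2)), ?_⟩
    conv_rhs => rw [hAu, leadingTerm_image_mul hξ, hε]

theorem exists_gap_leadingTermValues (p : ℕ) [NeZero p] :
    ∃ η > 0, ∀ x ∈ leadingTermValues p, ∀ y ∈ leadingTermValues p, x < y → x + η ≤ y := by
  have hfin : (leadingTermValues p).Finite := (Set.finite_range _).insert 0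
  have hnontrivial : (leadingTermValues p).Nontrivial :=
    ⟨0, .inl rfl, 2, .inr ⟨(1, 0), by simp⟩, two_ne_zero.symm⟩
  refine ⟨(leadingTermValues p).infsep, hfin.infsep_pos_iff_nontrivial.mpr hnontrivial,
    fun x hx y hy hxy => ?_⟩
  have hdist := Set.infsep_le_dist_of_mem hy hx hxy.ne'
  rw [Real.dist_eq, abs_of_pos (sub_pos.mpr hxy)] at hdist
  linarith

theorem eventually_skcount_lt_of_leadingTerm_lt {a : ℕ} (ha : 2 ≤ a) (ha' : a + 2 ≤ p) :
    ∀ᶠ k in atTop, ∀ A B : Finset (ZMod p), #A = a → #B = a →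
      leadingTerm k A < leadingTerm k B → skcount k A < skcount k B := by
  have hM := peakNorm_pos (N := p) (a := a) (by omega) (by omega)
  obtain ⟨η, hη, hgap⟩ := exists_gap_leadingTermValues p
  have herror : ∀ᶠ k in atTop, ∀ A : Finset (ZMod p), #A = a →
      |(p * skcount k A - a ^ (k + 1)) / peakNorm p a ^ (k + 1) - leadingTerm k A| < η / 2 := by
    simp only [eventually_all]
    rintro A rfl
    have h := tendsto_skcount_sub_leadingTerm A
    simpa using h.eventually (Metric.ball_mem_nhds 0 (half_pos hη))
  filter_upwards [herror] with k hk A B hA hB hlt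
  have hsep := hgap _ (leadingTerm_mem_leadingTermValues (A := A) (by omega) (by omega) k)
    _ (leadingTerm_mem_leadingTermValues (A := B) (by omega) (by omega) k) hlt
  have hAk := (abs_lt.mp (hk A hA)).2
  have hBk := (abs_lt.mp (hk B hB)).1
  have hdiv : ((p : ℝ) * skcount k A - a ^ (k + 1)) / peakNorm p a ^ (k + 1) <
      (p * skcount k B - a ^ (k + 1)) / peakNorm p a ^ (k + 1) := by linarith
  rw [div_lt_div_iff_of_pos_right (by positivity), sub_lt_sub_iff_right] at hdiv
  exact_mod_cast lt_of_mul_lt_mul_left hdiv p.cast_nonneg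

end LeadingTerm

section Minimizers

variable {p : ℕ} [Fact p.Prime]

theorem exists_forall_leadingTerm_interval_lt {a : ℕ} (ha : 2 ≤ a) (ha' : a + 2 ≤ p) {k : ℕ}
    (hk : (k : ZMod p) ≠ 1) :
    ∃ t : ZMod p, leadingTerm k (interval t a) < 0 ∧
      ∀ u : ZMod p, u = t ∨ u = 1 - (a : ZMod p) - t ∨
        leadingTerm k (interval t a) < leadingTerm k (interval u a) := by
  obtain ⟨ε, hε⟩ := exists_leadingTerm_interval_eq ha ha' k
  have hε0 : ((ε : ℤ) : ℝ) ≠ 0 := by simp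
  have hk0 : (k - 1 : ZMod p) ≠ 0 := sub_ne_zero.mpr hk
  obtain ⟨z, hz⟩ := Finite.exists_min fun z : ZMod p => ε * (ZMod.stdAddChar z : ℂ).re
  obtain ⟨w, hw⟩ := exists_mul_re_stdAddChar_neg (N := p) (by omega) hε0
  obtain ⟨t, rfl⟩ : ∃ t : ZMod p, (k - 1 : ZMod p) * (t + ((a : ZMod p) - 1) / 2) = z :=
    ⟨(k - 1 : ZMod p)⁻¹ * z - ((a : ZMod p) - 1) / 2, by field_simp; ring⟩
  refine ⟨t, by rw [hε]; linarith [hz w], fun u => ?_⟩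
  simp only [hε, mul_lt_mul_iff_right₀ (zero_lt_two' ℝ)]
  rcases (hz ((k - 1 : ZMod p) * (u + ((a : ZMod p) - 1) / 2))).lt_or_eq with hlt | heq
  · exact .inr (.inr hlt)
  rcases eq_or_eq_neg_of_re_stdAddChar_eq (mul_left_cancel₀ hε0 heq) with h | h
  · exact .inl (add_right_cancel (mul_left_cancel₀ hk0 h)).symm
  · rw [← mul_neg] at h
    have h2 := two_ne_zero_of_ne_two (show p ≠ 2 by omega)
    have hhalf := mul_div_cancel₀ ((a : ZMod p) - 1) h2
    exact .inr (.inl (by linear_combination mul_left_cancel₀ hk0 h - hhalf))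

theorem exists_interval_leadingTerm_lt {a : ℕ} (ha : 2 ≤ a) (ha' : a + 2 ≤ p) {k : ℕ}
    (hk : (k : ZMod p) ≠ 1) :
    ∃ t : ZMod p, ∀ B : Finset (ZMod p), #B = a →
      (∃ ξ : ZMod p, ξ ≠ 0 ∧ B = (interval t a).image (ξ * ·)) ∨
        leadingTerm k (interval t a) < leadingTerm k B := by
  obtain ⟨t, hneg, ht⟩ := exists_forall_leadingTerm_interval_lt ha ha' hk
  refine ⟨t, fun B hB => ?_⟩
  rcases leadingTerm_eq_zero_or_exists_eq_image_mul_interval k B with hzero | ⟨ξ, hξ, u, hBu⟩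
  · exact .inr (hzero ▸ hneg)
  rw [hB] at hBu
  subst hBu
  rw [leadingTerm_image_mul hξ]
  rcases ht u with rfl | rfl | hlt
  · exact .inl ⟨ξ, hξ, rfl⟩
  · refine .inl ⟨ξ * -1, mul_ne_zero hξ (neg_ne_zero.mpr one_ne_zero), ?_⟩
    rw [← image_mul_image_mul, image_neg_one_mul_interval]
  · exact .inr hlt

theorem stmt_14_general {a : ℕ} (ha : 2 ≤ a) (ha' : a + 2 ≤ p) :
    ∃ k0 : ℕ, ∀ k : ℕ, k0 ≤ k → ¬ k ≡ 1 [MOD p] →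
      ∃ t : ZMod p, ∀ A : Finset (ZMod p), #A = a →
        ((∀ B : Finset (ZMod p), #B = a → skcount k A ≤ skcount k B) ↔
          ∃ ξ : ZMod p, ξ ≠ 0 ∧ A = (interval t a).image (fun x => ξ * x)) := by
  obtain ⟨k0, hk0⟩ := eventually_atTop.mp (eventually_skcount_lt_of_leadingTerm_lt ha ha')
  refine ⟨k0, fun k hk hk1 => ?_⟩
  obtain ⟨t, ht⟩ := exists_interval_leadingTerm_lt ha ha' (k := k)
    fun h => hk1 ((ZMod.natCast_eq_natCast_iff k 1 p).mp (by simpa using h))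
  have hcard : #(interval t a) = a := card_interval (by omega) t
  have hmin (B : Finset (ZMod p)) (hB : #B = a) :
      (∃ ξ : ZMod p, ξ ≠ 0 ∧ B = (interval t a).image (ξ * ·)) ∨
        skcount k (interval t a) < skcount k B :=
    (ht B hB).imp_right (hk0 k hk _ B hcard hB)
  refine ⟨t, fun A hA => ⟨fun h => (hmin A hA).resolve_right (h _ hcard).not_gt, ?_⟩⟩
  rintro ⟨ξ, hξ, rfl⟩ B hB
  rw [skcount_image_mul hξ]
  rcases hmin B hB with ⟨ζ, hζ, rfl⟩ | hlt
  · rw [skcount_image_mul hζ]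
  · exact hlt.le

end Minimizers

theorem stmt_14 (p : ℕ) (hp : p.Prime) (hp7 : 7 ≤ p)
    (a : ℕ) (ha : 3 ≤ a) (ha' : a ≤ p - 3) :
    ∃ k0 : ℕ, ∀ k : ℕ, k0 ≤ k → ¬ k ≡ 1 [MOD p] →
      ∃ t : ZMod p, ∀ A : Finset (ZMod p), A.card = a →
        ((∀ B : Finset (ZMod p), B.card = a → skcount k A ≤ skcount k B) ↔
          ∃ ξ : ZMod p, ξ ≠ 0 ∧ A = (interval t a).image (fun x => ξ * x)) := by
  have : Fact p.Prime := ⟨hp⟩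
  exact stmt_14_general (by omega) (by omega)
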